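/- arXiv:math/0112086 — 2 statements merged into one kernel-verified Lean document; each statement's English description precedes it below -/
import Mathlib

section
/- Let S = {1,3,9,13}. Then: (i) for all integers m ≥ 1 and all integers n with 1 ≤ n ≤ 16, s̃(m·2^{n+5}−4, S) ≥ ⌈n/2⌉; (ii) for all integers m ≥ 4, s̃(m·2^{22}−4, S) ≥ 9; and (iii) s̃(2^{22}−4, S) = 8. -/
open scoped BigOperators

/-- `s(n)`: the number of 1's in the binary expansion of `n`. -/
def binDigitSum (n : ℕ) : ℕ := (Nat.digits 2 n).sum

/-- An `r`-tiling sequence with tiles in `S`, recorded as a list of pairs `(b_i, ℓ_i)`: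
each `ℓ_i ∈ S`, the `b_i` are weakly increasing, `ℓ_i > ℓ_{i+1}` whenever `b_i = b_{i+1}`,
and `∑ ℓ_i·2^{b_i} = r`. -/
def IsTiling (S : Finset ℕ) (r : ℕ) (L : List (ℕ × ℕ)) : Prop :=
  (∀ p ∈ L, p.2 ∈ S) ∧
  L.Chain' (fun p q => p.1 ≤ q.1 ∧ (p.1 = q.1 → q.2 < p.2)) ∧
  (L.map fun p => p.2 * 2 ^ p.1).sum = r

/-- `s̃(r,S)`: the minimal length of an `r`-tiling sequence (`⊤` if none exists). -/
noncomputable def stilde (S : Finset ℕ) (r : ℕ) : ℕ∞ :=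
  sInf {n : ℕ∞ | ∃ L : List (ℕ × ℕ), IsTiling S r L ∧ (L.length : ℕ∞) = n}

/-- `K̃(r,S)`: the set of `r`-tiling sequences of minimal length. -/
def Ktilde (S : Finset ℕ) (r : ℕ) : Set (List (ℕ × ℕ)) :=
  {L | IsTiling S r L ∧ (L.length : ℕ∞) = stilde S r}

/-!
Read a tiling of `m * 2 ^ k - q` from the low-order end. If the tiles at position `0` form the
set `A ⊆ S`, the remaining tiles, moved down one place, tile `m * 2 ^ (k - 1) - q'` with
`2 * q' = q + ∑ A`. Tilings are thus walks on a graph of carries `q`, the step `q → q'` costing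
`#A` tiles, and a lower bound comes from a potential `ψ` satisfying `a + ψ q' ≤ b * #A + ψ q`
along every step: any `k` steps from `q` cost at least `(a * k - ψ q) / b`.

For `S = {1, 3, 9, 13}` the carries reachable from `4` lie in `[1, 26]`, and the cheapest cycle
spends two tiles on five positions, because `4 * 13 + 8 * 9 = 2 ^ 7 - 4` leads from the carry `4`
back to itself. So `a / b = 2 / 5`, and repeating this cycle shows that the bound is attained.
-/

section Tiling

variable {S : Finset ℕ} {r : ℕ} {L : List (ℕ × ℕ)}

theorem isTiling_iff_pairwise :
    IsTiling S r L ↔ (∀ p ∈ L, p.2 ∈ S) ∧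
      L.Pairwise (fun p q => p.1 ≤ q.1 ∧ (p.1 = q.1 → q.2 < p.2)) ∧
      (L.map fun p => p.2 * 2 ^ p.1).sum = r := by
  have : IsTrans (ℕ × ℕ) (fun p q => p.1 ≤ q.1 ∧ (p.1 = q.1 → q.2 < p.2)) :=
    ⟨fun _ _ _ _ _ => by grind⟩
  exact and_congr_right' (and_congr_left' List.isChain_iff_pairwise)

theorem IsTiling.append {r' : ℕ} {L' : List (ℕ × ℕ)} (hL : IsTiling S r L)
    (hL' : IsTiling S r' L') (hlt : ∀ p ∈ L, ∀ q ∈ L', p.1 < q.1) :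
    IsTiling S (r + r') (L ++ L') := by
  rw [isTiling_iff_pairwise] at *
  obtain ⟨hmem, hpair, hsum⟩ := hL
  obtain ⟨hmem', hpair', hsum'⟩ := hL'
  refine ⟨List.forall_mem_append.2 ⟨hmem, hmem'⟩, List.pairwise_append.2 ⟨hpair, hpair', ?_⟩, ?_⟩
  · exact fun p hp q hq => ⟨(hlt p hp q hq).le, fun h => absurd h (hlt p hp q hq).ne⟩
  · rw [List.map_append, List.sum_append, hsum, hsum']

theorem sum_map_mul_two_pow_eq_add (L : List (ℕ × ℕ)) :
    (L.map fun p => p.2 * 2 ^ p.1).sum =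
      ((L.filter (·.1 = 0)).map Prod.snd).sum +
        2 * ((L.filter (·.1 ≠ 0)).map fun p => p.2 * 2 ^ (p.1 - 1)).sum := by
  induction L with
  | nil => rfl
  | cons p L ih =>
    obtain ⟨_ | b, ℓ⟩ := p
    · simp [ih, add_assoc]
    · simp only [Nat.succ_ne_zero, List.map_cons, List.sum_cons, decide_false, ih, ne_eq,
        not_false_eq_true, decide_true, List.filter_cons_of_pos, pow_succ, Nat.add_sub_cancel,
        Bool.false_eq_true, List.filter_cons_of_neg]
      ring

theorem IsTiling.exists_subset_halve (hL : IsTiling S r L) :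
    ∃ A ⊆ S, ∃ r' L', IsTiling S r' L' ∧ r = ∑ ℓ ∈ A, ℓ + 2 * r' ∧
      L.length = A.card + L'.length := by
  obtain ⟨hmem, hpair, hsum⟩ := isTiling_iff_pairwise.1 hL
  set low := (L.filter (·.1 = 0)).map Prod.snd with hlow
  set high := (L.filter (·.1 ≠ 0)).map fun p => (p.1 - 1, p.2) with hhigh
  have low_nodup : low.Nodup := by
    rw [hlow, List.Nodup, List.pairwise_map]
    refine (hpair.filter _).imp_of_mem fun hp hq hpq => (hpq.2 ?_).ne'
    simp_all
  have high_tiling : IsTiling S (high.map fun p => p.2 * 2 ^ p.1).sum high := by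
    refine isTiling_iff_pairwise.2 ⟨?_, ?_, rfl⟩
    · simp only [hhigh, List.forall_mem_map]
      exact fun p hp => hmem p (List.mem_of_mem_filter hp)
    · rw [hhigh, List.pairwise_map]
      refine (hpair.filter _).imp_of_mem fun hp hq hpq => ?_
      simp only [ne_eq, decide_not, List.mem_filter, Bool.not_eq_true', decide_eq_false_iff_not]
        at hp hq
      exact ⟨by omega, fun h => hpq.2 (by omega)⟩
  refine ⟨low.toFinset, ?_, _, high, high_tiling, ?_, ?_⟩
  · intro ℓ hℓ
    obtain ⟨p, hp, rfl⟩ := List.mem_map.1 (List.mem_toFinset.1 hℓ)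
    exact hmem p (List.mem_of_mem_filter hp)
  · rw [List.sum_toFinset _ low_nodup, List.map_id', ← hsum, sum_map_mul_two_pow_eq_add, hhigh,
      List.map_map]
    rfl
  · rw [List.toFinset_card_of_nodup low_nodup, hlow, hhigh, List.length_map, List.length_map]
    simpa using L.length_eq_length_filter_add (·.1 = 0)

theorem IsTiling.stilde_le_length (hL : IsTiling S r L) : stilde S r ≤ L.length :=
  sInf_le ⟨L, hL, rfl⟩

theorem le_stilde_iff {t : ℕ∞} : t ≤ stilde S r ↔ ∀ L, IsTiling S r L → t ≤ L.length := by
  simp [stilde, le_sInf_iff]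

end Tiling

/-- `ψ` is a potential on the carries in `D`: reading one binary place with the tiles `A` turns the
carry `q` into `(q + ∑ A) / 2`, which stays in `D`, and the `b * #A` paid for the tiles covers the
gain of `ψ` plus `a`. It certifies that a tiling uses at least `a / b` tiles per place on
average. -/
def IsCarryPotential (S D : Finset ℕ) (a b : ℕ) (ψ : ℕ → ℕ) : Prop :=
  ∀ q ∈ D, ∀ A ⊆ S, Even (q + ∑ ℓ ∈ A, ℓ) →
    (q + ∑ ℓ ∈ A, ℓ) / 2 ∈ D ∧ a + ψ ((q + ∑ ℓ ∈ A, ℓ) / 2) ≤ b * A.card + ψ q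

theorem IsCarryPotential.le_length {S D : Finset ℕ} {a b e m : ℕ} {ψ : ℕ → ℕ}
    (hψ : IsCarryPotential S D a b ψ)
    (hm : ∀ q ∈ D, ∀ r L, IsTiling S r L → r + q = m → e ≤ b * L.length + ψ q)
    (k : ℕ) {q r : ℕ} {L : List (ℕ × ℕ)} (hq : q ∈ D) (hL : IsTiling S r L)
    (hr : r + q = m * 2 ^ k) :
    a * k + e ≤ b * L.length + ψ q := by
  induction k generalizing q r L with
  | zero => simpa using hm q hq r L hL (by simpa using hr)
  | succ k ih =>
    obtain ⟨A, hA, r', L', hL', rfl, hlen⟩ := hL.exists_subset_halve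
    rw [pow_succ, ← mul_assoc] at hr
    obtain ⟨hq', hstep⟩ := hψ q hq A hA (Nat.even_iff.2 (by omega))
    calc
      a * (k + 1) + e = a + (a * k + e) := by ring
      _ ≤ a + (b * L'.length + ψ ((q + ∑ ℓ ∈ A, ℓ) / 2)) :=
        Nat.add_le_add_left (ih hq' hL' (by omega)) a
      _ ≤ b * L'.length + (b * A.card + ψ q) := by omega
      _ = b * L.length + ψ q := by rw [hlen]; ring

/-- The potential for the tiles `{1, 3, 9, 13}` on the carries in `[1, 26]`, with the value at `0`
a dummy. If `q` has odd part `u`, then the entry is `2 * v₂(q) + c`, where `c = 0` for `u = 1`,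
`c = 3` for `3 ≤ u ≤ 9`, and `c = 5` for `11 ≤ u`. -/
def carryPotential (q : ℕ) : ℕ :=
  [0, 0, 2, 3, 4, 3, 5, 3, 6, 3, 5, 5, 7, 5, 5, 5, 8, 5, 5, 5, 7, 5, 7, 5, 9, 5, 7].getD q 0

theorem isCarryPotential_carryPotential :
    IsCarryPotential {1, 3, 9, 13} (Finset.Icc 1 26) 2 5 carryPotential := by
  unfold IsCarryPotential
  decide +kernel

theorem three_le_carryPotential {q : ℕ} (hq : q ∈ Finset.Icc 4 26) : 3 ≤ carryPotential q := by
  revert q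
  decide

/- The potential of the initial carry `4` is `4`, and `2 * k / 5`, rounded down, is
`⌈(2 * k - 4) / 5⌉`. -/
theorem two_mul_div_five_le_stilde {m k : ℕ} (h : 4 ≤ m * 2 ^ k) :
    ((2 * k / 5 : ℕ) : ℕ∞) ≤ stilde {1, 3, 9, 13} (m * 2 ^ k - 4) := by
  refine le_stilde_iff.2 fun L hL => Nat.cast_le.2 ?_
  have bound : 2 * k + 0 ≤ 5 * L.length + 4 :=
    isCarryPotential_carryPotential.le_length (fun _ _ _ _ _ _ => Nat.zero_le _) k (by decide) hL
      (Nat.sub_add_cancel h)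
  omega

theorem two_mul_add_three_div_five_le_stilde {m : ℕ} (hm : 4 ≤ m) (k : ℕ) :
    (((2 * k + 3) / 5 : ℕ) : ℕ∞) ≤ stilde {1, 3, 9, 13} (m * 2 ^ k - 4) := by
  -- The leading part `m` leaves either a carry of at least `4` or a further tile to place.
  have base : ∀ q ∈ Finset.Icc 1 26, ∀ r L, IsTiling {1, 3, 9, 13} r L → r + q = m →
      3 ≤ 5 * L.length + carryPotential q := by
    rintro q hq r L ⟨-, -, hsum⟩ hr
    rcases le_or_gt 4 q with h4 | h4
    · have := three_le_carryPotential (Finset.mem_Icc.2 ⟨h4, (Finset.mem_Icc.1 hq).2⟩)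
      omega
    · have : L ≠ [] := by
        rintro rfl
        simp only [List.map_nil, List.sum_nil] at hsum
        omega
      have := List.length_pos_iff.2 this
      omega
  refine le_stilde_iff.2 fun L hL => Nat.cast_le.2 ?_
  have bound : 2 * k + 3 ≤ 5 * L.length + 4 :=
    isCarryPotential_carryPotential.le_length base k (by decide) hL
      (Nat.sub_add_cancel (hm.trans (Nat.le_mul_of_pos_right m (by positivity))))
  omega

theorem exists_isTiling_two_pow_sub_four (j : ℕ) :
    ∃ L, IsTiling {1, 3, 9, 13} (2 ^ (5 * j + 2) - 4) L ∧ L.length = 2 * j ∧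
      ∀ p ∈ L, p.1 < 5 * j + 2 := by
  induction j with
  | zero => exact ⟨[], isTiling_iff_pairwise.2 (by simp), rfl, by simp⟩
  | succ j ih =>
    obtain ⟨L, hL, hlen, hlt⟩ := ih
    have block : IsTiling {1, 3, 9, 13} (31 * 2 ^ (5 * j + 2))
        [(5 * j + 2, 13), (5 * j + 3, 9)] := by
      refine isTiling_iff_pairwise.2 ⟨by simp, by simp, ?_⟩
      simp only [List.map_cons, List.map_nil, List.sum_cons, List.sum_nil]
      ring
    have sum_eq : 2 ^ (5 * j + 2) - 4 + 31 * 2 ^ (5 * j + 2) = 2 ^ (5 * (j + 1) + 2) - 4 := by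
      have : 2 ^ 2 ≤ 2 ^ (5 * j + 2) := Nat.pow_le_pow_right two_pos (by omega)
      rw [show 5 * (j + 1) + 2 = 5 * j + 2 + 5 by ring, pow_add _ _ 5]
      omega
    have separated : ∀ p ∈ L, ∀ q ∈ [(5 * j + 2, 13), (5 * j + 3, 9)], p.1 < q.1 := by
      intro p hp q hq
      have := hlt p hp
      grind
    refine ⟨_, sum_eq ▸ hL.append block separated, ?_, ?_⟩
    · rw [List.length_append, hlen]
      rfl
    · intro p hp
      rcases List.mem_append.1 hp with hp | hp
      · have := hlt p hp
        omega
      · grind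

theorem stilde_two_pow_sub_four (j : ℕ) :
    stilde {1, 3, 9, 13} (2 ^ (5 * j + 2) - 4) = (2 * j : ℕ) := by
  refine le_antisymm ?_ ?_
  · obtain ⟨L, hL, hlen, -⟩ := exists_isTiling_two_pow_sub_four j
    exact hlen ▸ hL.stilde_le_length
  · have h := two_mul_div_five_le_stilde (m := 1) (k := 5 * j + 2)
      (by rw [one_mul]; exact Nat.pow_le_pow_right two_pos (by omega : 2 ≤ 5 * j + 2))
    rwa [one_mul, show 2 * (5 * j + 2) / 5 = 2 * j by omega] at h

theorem stmt8_general :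
    (∀ m k : ℕ, 4 ≤ m * 2 ^ k →
      ((2 * k / 5 : ℕ) : ℕ∞) ≤ stilde {1, 3, 9, 13} (m * 2 ^ k - 4)) ∧
    (∀ m k : ℕ, 4 ≤ m →
      (((2 * k + 3) / 5 : ℕ) : ℕ∞) ≤ stilde {1, 3, 9, 13} (m * 2 ^ k - 4)) ∧
    ∀ j : ℕ, stilde {1, 3, 9, 13} (2 ^ (5 * j + 2) - 4) = (2 * j : ℕ) :=
  ⟨fun _ _ => two_mul_div_five_le_stilde, fun _ k hm => two_mul_add_three_div_five_le_stilde hm k,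
    stilde_two_pow_sub_four⟩

theorem stmt8 :
    (∀ m n : ℕ, 1 ≤ m → 1 ≤ n → n ≤ 16 →
      (((n + 1) / 2 : ℕ) : ℕ∞) ≤ stilde {1, 3, 9, 13} (m * 2 ^ (n + 5) - 4)) ∧
    (∀ m : ℕ, 4 ≤ m → (9 : ℕ∞) ≤ stilde {1, 3, 9, 13} (m * 2 ^ 22 - 4)) ∧
    stilde {1, 3, 9, 13} (2 ^ 22 - 4) = 8 := by
  obtain ⟨lower, lower_of_four_le, eq_two_mul⟩ := stmt8_general
  refine ⟨fun m n hm _ hn => ?_, fun m hm => lower_of_four_le m 22 hm, eq_two_mul 4⟩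
  have : 4 ≤ m * 2 ^ (n + 5) :=
    le_mul_of_one_le_of_le hm (Nat.pow_le_pow_right two_pos (by omega : 2 ≤ n + 5))
  exact (Nat.cast_le.2 (by omega)).trans (lower m (n + 5) this)
end

section
/- Let S = {3,5,9,13,17} and r = 2^{26}−4. Then s̃(r,S) = 9 and the unique r-tiling sequence with tiles in S of length 9 is (2,13),(3,17),(6,13),(10,13),(11,17),(14,13),(18,13),(19,17),(22,13); that is, 2^{26}−4 = 13·2^{22}+17·2^{19}+13·2^{18}+13·2^{14}+17·2^{11}+13·2^{10}+13·2^{6}+17·2^{3}+13·2^{2} and K̃(r,S) consists of exactly this one sequence. -/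
open scoped BigOperators

/-!
A tiling of `2 ^ N - 2 ^ a` is read from the lowest level upwards. When level `b` is reached,
`2 ^ a` and the tiles placed so far add up to `c * 2 ^ b` for some carry `c`; placing a tile `ℓ`
turns `c` into `c + ℓ`, and passing to the next level halves `c`. The carry starts at `2 ^ a` and
must end as `1` at level `N`. If a potential `g` of the carry loses at least `3` at every halving
and gains at most `8` with every tile, then a tiling with `ν` tiles satisfies
`3 * N + g 1 ≤ g (2 ^ a) + 8 * ν`.

For the tiles `3, 5, 9, 13, 17` there is such a potential with `g (2 ^ a) = 3 * a`, so
`2 ^ a * (2 ^ (8 * q) - 1)` needs `3 * q` tiles. With exactly `3 * q` tiles every move is tight, and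
from a power of two the tight moves run through the single cycle
`1 → 14 → 7 → 24 → 12 → 6 → 3 → 16 → 8 → 4 → 2 → 1`,
which places `13`, `17`, `13` at relative levels `0`, `1`, `4` and climbs eight levels.
-/

section MinimalLength

variable {S : Finset ℕ} {r : ℕ} {L₀ : List (ℕ × ℕ)}

theorem IsTiling.stilde_eq_length (h₀ : IsTiling S r L₀)
    (hmin : ∀ L, IsTiling S r L → L₀.length ≤ L.length) : stilde S r = L₀.length := by
  refine le_antisymm (sInf_le ⟨L₀, h₀, rfl⟩) (le_sInf ?_)
  rintro _ ⟨L, hL, rfl⟩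
  exact_mod_cast hmin L hL

theorem IsTiling.Ktilde_eq_singleton (h₀ : IsTiling S r L₀)
    (hmin : ∀ L, IsTiling S r L → L₀.length ≤ L.length)
    (huniq : ∀ L, IsTiling S r L → L.length = L₀.length → L = L₀) : Ktilde S r = {L₀} := by
  have hlen := h₀.stilde_eq_length hmin
  refine Set.eq_singleton_iff_unique_mem.2 ⟨⟨h₀, hlen.symm⟩, fun L hL => huniq L hL.1 ?_⟩
  exact_mod_cast hL.2.trans hlen

end MinimalLength

section Potential

/-- `L` is what remains of a tiling of `2 ^ N` once the carry `c` has been reached at level `b`: its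
tiles lie in `S`, their levels increase weakly from `b` on, and they complete `c * 2 ^ b` to
`2 ^ N`. The order of tiles on the same level is not recorded. -/
structure Completes (S : Finset ℕ) (N b c : ℕ) (L : List (ℕ × ℕ)) : Prop where
  mem : ∀ p ∈ L, p.2 ∈ S
  levels : (b :: L.map Prod.fst).IsChain (· ≤ ·)
  add_sum : c * 2 ^ b + (L.map fun p => p.2 * 2 ^ p.1).sum = 2 ^ N

/-- A potential bounding the number of tiles from below: a function of the carry that loses at least
`β` when the carry is halved and gains at most `α` when a tile is added. -/
structure IsTilingPotential (S : Finset ℕ) (α β : ℕ) (g : ℕ → ℕ) : Prop where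
  add_le_two_mul : ∀ c, 0 < c → g c + β ≤ g (2 * c)
  add_tile_le : ∀ c, 0 < c → ∀ ℓ ∈ S, g (c + ℓ) ≤ g c + α

/-- From the carry `c`, halving `k` times, to `d`, and then adding the tile `ℓ` is the only way of
reaching the next tile for which `IsTilingPotential.add_tile_le` is an equality. -/
def IsForcedStep (S : Finset ℕ) (α : ℕ) (g : ℕ → ℕ) (c k d ℓ : ℕ) : Prop :=
  ∀ j e, c = e * 2 ^ j → ∀ m ∈ S, g (e + m) = g e + α → j = k ∧ e = d ∧ m = ℓ

/-- The completions for which the length bound `IsTilingPotential.le_length` is an equality. -/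
structure IsTight (S : Finset ℕ) (α β : ℕ) (g : ℕ → ℕ) (N b c : ℕ) (L : List (ℕ × ℕ)) : Prop
    extends Completes S N b c L where
  length_eq : β * N + g 1 = g c + α * L.length + β * b

variable {S : Finset ℕ} {α β : ℕ} {g : ℕ → ℕ} {N a b c d k b' ℓ r : ℕ} {L : List (ℕ × ℕ)}

theorem two_pow_dvd_sum (h : (b :: L.map Prod.fst).IsChain (· ≤ ·)) :
    2 ^ b ∣ (L.map fun p => p.2 * 2 ^ p.1).sum := by
  refine List.dvd_sum fun x hx => ?_
  obtain ⟨p, hp, rfl⟩ := List.mem_map.1 hx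
  exact (pow_dvd_pow 2 (h.rel_cons (List.mem_map_of_mem hp))).mul_left _

theorem IsTiling.completes (h : IsTiling S r L) (hr : 2 ^ a + r = 2 ^ N) :
    Completes S N 0 (2 ^ a) L where
  mem := h.1
  levels := by
    refine List.IsChain.cons ((List.isChain_map _).2 ?_) fun _ _ => Nat.zero_le _
    exact List.IsChain.imp (fun _ _ hpq => hpq.1) h.2.1
  add_sum := by rw [h.2.2, pow_zero, mul_one, hr]

theorem Completes.exists_step (hS : 0 ∉ S) (h : Completes S N b c ((b', ℓ) :: L)) :
    ∃ k d, b' = b + k ∧ c = d * 2 ^ k ∧ ℓ ∈ S ∧ Completes S N b' (d + ℓ) L := by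
  obtain ⟨hmem, hlevels, hsum⟩ := h
  have hℓ : ℓ ∈ S := hmem _ List.mem_cons_self
  obtain ⟨hb, htail⟩ := List.isChain_cons_cons.1 hlevels
  obtain ⟨k, rfl⟩ := Nat.exists_eq_add_of_le hb
  rw [List.map_cons, List.sum_cons] at hsum
  have hN : b + k ≤ N := by
    refine (Nat.pow_le_pow_iff_right one_lt_two).1 ?_
    have hpos : 0 < ℓ := Nat.pos_of_ne_zero (ne_of_mem_of_not_mem hℓ hS)
    calc 2 ^ (b + k) ≤ ℓ * 2 ^ (b + k) := Nat.le_mul_of_pos_left _ hpos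
      _ ≤ 2 ^ N := by rw [← hsum, add_left_comm]; exact Nat.le_add_right _ _
  have hdvd : 2 ^ (b + k) ∣ c * 2 ^ b := by
    refine (Nat.dvd_add_left ?_).1 (hsum ▸ pow_dvd_pow 2 hN)
    exact (dvd_mul_left _ _).add (two_pow_dvd_sum htail)
  rw [pow_add, mul_comm (2 ^ b), Nat.mul_dvd_mul_iff_right (by positivity)] at hdvd
  obtain ⟨d, rfl⟩ := hdvd
  refine ⟨k, d, rfl, mul_comm _ _, hℓ, fun p hp => hmem p (List.mem_cons_of_mem _ hp), htail, ?_⟩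
  rw [← hsum]
  ring

theorem Completes.ne_nil (h : Completes S N b c L) (hc : ∀ n < c, c ≠ 2 ^ n) : L ≠ [] := by
  rintro rfl
  have hsum : c * 2 ^ b = 2 ^ N := by simpa using h.add_sum
  obtain ⟨n, -, rfl⟩ := (Nat.dvd_prime_pow Nat.prime_two).1 (Dvd.intro _ hsum)
  exact hc n n.lt_two_pow_self rfl

theorem isForcedStep_of_forall_le (hc : 0 < c) (hd : c = d * 2 ^ k)
    (h : ∀ j < c, ∀ e ≤ c, c = e * 2 ^ j → ∀ m ∈ S, g (e + m) = g e + α → j = k ∧ m = ℓ) :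
    IsForcedStep S α g c k d ℓ := by
  intro j e hce m hm hg
  have he : 0 < e := Nat.pos_of_mul_pos_right (hce ▸ hc)
  have hj : j < c := j.lt_two_pow_self.trans_le (hce ▸ Nat.le_mul_of_pos_left _ he)
  have hec : e ≤ c := hce ▸ Nat.le_mul_of_pos_right _ (Nat.two_pow_pos j)
  obtain ⟨rfl, rfl⟩ := h j hj e hec hce m hm hg
  exact ⟨rfl, Nat.eq_of_mul_eq_mul_right (Nat.two_pow_pos j) (hce ▸ hd), rfl⟩

namespace IsTilingPotential

theorem add_mul_le_mul_two_pow (hg : IsTilingPotential S α β g) (hc : 0 < c) (k : ℕ) :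
    g c + β * k ≤ g (c * 2 ^ k) := by
  induction k with
  | zero => simp
  | succ k ih =>
    calc g c + β * (k + 1) = g c + β * k + β := by ring
      _ ≤ g (c * 2 ^ k) + β := by gcongr
      _ ≤ g (2 * (c * 2 ^ k)) := hg.add_le_two_mul _ (by positivity)
      _ = g (c * 2 ^ (k + 1)) := by ring_nf

theorem le_length (hg : IsTilingPotential S α β g) (hS : 0 ∉ S) (hc : 0 < c)
    (h : Completes S N b c L) : β * N + g 1 ≤ g c + α * L.length + β * b := by
  induction L generalizing b c with
  | nil =>
    have hsum : c * 2 ^ b = 2 ^ N := by simpa using h.add_sum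
    have hbN : b ≤ N := (Nat.pow_le_pow_iff_right one_lt_two).1
      (hsum ▸ Nat.le_mul_of_pos_left (2 ^ b) hc)
    obtain ⟨n, rfl⟩ := Nat.exists_eq_add_of_le' hbN
    obtain rfl : c = 1 * 2 ^ n :=
      Nat.eq_of_mul_eq_mul_right (Nat.two_pow_pos b) (by rw [hsum, pow_add, one_mul])
    have := hg.add_mul_le_mul_two_pow one_pos n
    simp only [List.length_nil]
    linarith
  | cons p L ih =>
    obtain ⟨k, d, hk, rfl, hℓ, htail⟩ := h.exists_step hS
    have hd : 0 < d := Nat.pos_of_mul_pos_right hc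
    have hrest := ih (by omega) htail
    have hhalve := hg.add_mul_le_mul_two_pow hd k
    have htile := hg.add_tile_le d hd _ hℓ
    rw [hk] at hrest
    rw [List.length_cons]
    linarith

theorem exists_cons_of_isForcedStep (hg : IsTilingPotential S α β g) (hS : 0 ∉ S) (hc : 0 < c)
    (hstep : IsForcedStep S α g c k d ℓ) (h : IsTight S α β g N b c L) (hL : L ≠ []) :
    ∃ L', L = (b + k, ℓ) :: L' ∧ IsTight S α β g N (b + k) (d + ℓ) L' := by
  obtain ⟨⟨b', m⟩, L, rfl⟩ := List.exists_cons_of_ne_nil hL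
  obtain ⟨j, e, rfl, rfl, hm, htail⟩ := h.exists_step hS
  have he : 0 < e := Nat.pos_of_mul_pos_right hc
  have hrest := hg.le_length hS (by omega) htail
  have hhalve := hg.add_mul_le_mul_two_pow he j
  have htile := hg.add_tile_le e he m hm
  have hlength := h.length_eq
  rw [List.length_cons] at hlength
  obtain ⟨rfl, rfl, rfl⟩ := hstep j e rfl m hm (by linarith)
  exact ⟨L, rfl, htail, by linarith⟩

end IsTilingPotential

end Potential

section Tiles

/-- The tile set `{3, 5, 9, 13, 17}` of the theorem. -/
abbrev tiles : Finset ℕ := {3, 5, 9, 13, 17}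

/-- The amount by which `potential` stays below `3 * ⌈log₂ c⌉`. -/
def deficit : ℕ → ℕ
  | 23 => 1
  | 3 | 6 | 12 | 15 | 17 | 21 | 24 => 2
  | 11 | 13 | 22 | 26 | 35 => 3
  | 7 | 14 | 20 => 4
  | 5 | 10 | 19 => 5
  | 9 | 18 => 8
  | _ => 0

/-- A tiling potential for `tiles`, with `α = 8` and `β = 3`. It is the largest one below
`3 * ⌈log₂ c⌉` for which adding a tile to a power of two or to `3`, `6`, `7`, `12`, `14`, `24` gains
less than `8`, except for the additions `1 + 13`, `7 + 17` and `3 + 13`; its values were found as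
shortest-path distances. The subtraction never truncates. -/
def potential (c : ℕ) : ℕ := 3 * Nat.clog 2 c - deficit c

/-- The tiling of `2 ^ a * (2 ^ (8 * q) - 1)` that repeats the pattern `13`, `17`, `13` at relative
levels `0`, `1`, `4` with period `8`. -/
def periodicTiling (a : ℕ) : ℕ → List (ℕ × ℕ)
  | 0 => []
  | q + 1 => (a, 13) :: (a + 1, 17) :: (a + 4, 13) :: periodicTiling (a + 8) q

variable {N a b c k q ℓ : ℕ} {L : List (ℕ × ℕ)}

theorem deficit_eq_zero (hc : 35 < c) : deficit c = 0 := by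
  unfold deficit
  split <;> omega

theorem potential_le (c : ℕ) : potential c ≤ 3 * Nat.clog 2 c := Nat.sub_le _ _

theorem potential_eq (hc : 35 < c) : potential c = 3 * Nat.clog 2 c := by
  rw [potential, deficit_eq_zero hc, Nat.sub_zero]

theorem clog_two_mul (hc : 0 < c) : Nat.clog 2 (2 * c) = Nat.clog 2 c + 1 := by
  rw [Nat.clog_of_one_lt one_lt_two (by omega)]
  congr 2
  omega

theorem potential_add_le (hc : 35 < c) (hℓ : ℓ ≤ c) : potential (c + ℓ) ≤ potential c + 3 :=
  calc potential (c + ℓ) ≤ 3 * Nat.clog 2 (c + ℓ) := potential_le _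
    _ ≤ 3 * Nat.clog 2 (2 * c) := by gcongr; omega
    _ = potential c + 3 := by rw [clog_two_mul (by omega), potential_eq hc, mul_add_one]

theorem le_of_mem_tiles (hℓ : ℓ ∈ tiles) : ℓ ≤ 17 :=
  (by decide : ∀ ℓ ∈ tiles, ℓ ≤ 17) ℓ hℓ

theorem isTilingPotential_potential : IsTilingPotential tiles 8 3 potential where
  add_le_two_mul c hc := by
    rcases lt_or_ge c 18 with hlt | hge
    · exact (by decide : ∀ c < 18, 0 < c → potential c + 3 ≤ potential (2 * c)) c hlt hc
    · have := potential_le c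
      rw [potential_eq (c := 2 * c) (by omega), clog_two_mul hc]
      omega
  add_tile_le c hc ℓ hℓ := by
    rcases lt_or_ge c 36 with hlt | hge
    · exact (by decide : ∀ c < 36, 0 < c → ∀ ℓ ∈ tiles, potential (c + ℓ) ≤ potential c + 8)
        c hlt hc ℓ hℓ
    · have := le_of_mem_tiles hℓ
      have := potential_add_le hge (show ℓ ≤ c by omega)
      omega

theorem potential_two_pow (i : ℕ) : potential (2 ^ i) = 3 * i := by
  rcases lt_or_ge i 6 with hlt | hge
  · exact (by decide : ∀ i < 6, potential (2 ^ i) = 3 * i) i hlt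
  · have := Nat.pow_le_pow_right two_pos hge
    rw [potential_eq (by omega), Nat.clog_pow _ _ one_lt_two]

theorem isForcedStep_two_pow (k : ℕ) : IsForcedStep tiles 8 potential (2 ^ k) k 1 13 := by
  intro j e hce m hm hg
  obtain ⟨i, -, rfl⟩ := (Nat.dvd_prime_pow Nat.prime_two).1 (Dvd.intro _ hce.symm)
  obtain ⟨rfl, rfl⟩ : i = 0 ∧ m = 13 := by
    rcases lt_or_ge i 6 with hlt | hge
    · exact (by decide : ∀ i < 6, ∀ m ∈ tiles,
        potential (2 ^ i + m) = potential (2 ^ i) + 8 → i = 0 ∧ m = 13) i hlt m hm hg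
    · have := Nat.pow_le_pow_right two_pos hge
      have := le_of_mem_tiles hm
      have := potential_add_le (c := 2 ^ i) (ℓ := m) (by omega) (by omega)
      omega
  exact ⟨(Nat.pow_right_injective le_rfl (by simpa using hce)).symm, rfl, rfl⟩

theorem isForcedStep_fourteen : IsForcedStep tiles 8 potential 14 1 7 17 :=
  isForcedStep_of_forall_le (by decide) (by decide) (by decide)

theorem isForcedStep_twentyFour : IsForcedStep tiles 8 potential 24 3 3 13 :=
  isForcedStep_of_forall_le (by decide) (by decide) (by decide)

theorem exists_eq_periodicTiling_of_isTight (h : IsTight tiles 8 3 potential N b (2 ^ k) L) :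
    ∃ q, L = periodicTiling (b + k) q := by
  induction hn : L.length using Nat.strong_induction_on generalizing b k L with
  | _ n ih =>
    have hg := isTilingPotential_potential
    have h0 : 0 ∉ tiles := by decide
    rcases eq_or_ne L [] with rfl | hL
    · exact ⟨0, rfl⟩
    obtain ⟨L₁, rfl, h₁⟩ :=
      hg.exists_cons_of_isForcedStep h0 (Nat.two_pow_pos k) (isForcedStep_two_pow k) h hL
    obtain ⟨L₂, rfl, h₂⟩ :=
      hg.exists_cons_of_isForcedStep h0 (by decide) isForcedStep_fourteen h₁
        (h₁.ne_nil (by decide))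
    obtain ⟨L₃, rfl, h₃⟩ :=
      hg.exists_cons_of_isForcedStep h0 (by decide) isForcedStep_twentyFour h₂
        (h₂.ne_nil (by decide))
    obtain ⟨q, rfl⟩ := ih L₃.length (by simp only [List.length_cons] at hn; omega)
      (k := 4) h₃ rfl
    exact ⟨q + 1, rfl⟩

theorem length_periodicTiling (a q : ℕ) : (periodicTiling a q).length = 3 * q := by
  induction q generalizing a with
  | zero => rfl
  | succ q ih =>
    simp only [periodicTiling, List.length_cons, ih]
    ring

theorem mem_tiles_of_mem_periodicTiling (a q : ℕ) : ∀ p ∈ periodicTiling a q, p.2 ∈ tiles := by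
  induction q generalizing a with
  | zero => simp [periodicTiling]
  | succ q ih => simpa [periodicTiling] using ih (a + 8)

theorem isChain_cons_periodicTiling (p : ℕ × ℕ) (a q : ℕ) (hp : p.1 ≤ a ∧ (p.1 = a → 13 < p.2)) :
    (p :: periodicTiling a q).IsChain fun p q => p.1 ≤ q.1 ∧ (p.1 = q.1 → q.2 < p.2) := by
  induction q generalizing p a with
  | zero => exact List.isChain_singleton p
  | succ q ih =>
    simp only [periodicTiling, List.isChain_cons_cons]
    exact ⟨hp, by simp, by simp, ih _ _ (by simp)⟩

theorem two_pow_add_sum_periodicTiling (a q : ℕ) :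
    2 ^ a + ((periodicTiling a q).map fun p => p.2 * 2 ^ p.1).sum = 2 ^ (8 * q + a) := by
  induction q generalizing a with
  | zero => simp [periodicTiling]
  | succ q ih =>
    simp only [periodicTiling, List.map_cons, List.sum_cons]
    calc _ = 2 ^ (a + 8) + ((periodicTiling (a + 8) q).map fun p => p.2 * 2 ^ p.1).sum := by ring
      _ = 2 ^ (8 * (q + 1) + a) := by rw [ih]; ring_nf

theorem two_pow_add_two_pow_mul (a q : ℕ) :
    2 ^ a + 2 ^ a * (2 ^ (8 * q) - 1) = 2 ^ (8 * q + a) := by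
  rw [← mul_one_add, Nat.add_sub_cancel' Nat.one_le_two_pow, ← pow_add, add_comm]

theorem isTiling_periodicTiling (a q : ℕ) :
    IsTiling tiles (2 ^ a * (2 ^ (8 * q) - 1)) (periodicTiling a q) := by
  refine ⟨mem_tiles_of_mem_periodicTiling a q, ?_, ?_⟩
  · exact (isChain_cons_periodicTiling (0, 14) a q (by simp)).tail
  · have := two_pow_add_sum_periodicTiling a q
    rw [← two_pow_add_two_pow_mul] at this
    exact Nat.add_left_cancel this

theorem three_mul_le_length (h : IsTiling tiles (2 ^ a * (2 ^ (8 * q) - 1)) L) :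
    3 * q ≤ L.length := by
  have := isTilingPotential_potential.le_length (by decide) (Nat.two_pow_pos a)
    (h.completes (two_pow_add_two_pow_mul a q))
  rw [potential_two_pow, show potential 1 = 0 by decide] at this
  omega

theorem eq_periodicTiling_of_length_eq (h : IsTiling tiles (2 ^ a * (2 ^ (8 * q) - 1)) L)
    (hlen : L.length = 3 * q) : L = periodicTiling a q := by
  have htight : IsTight tiles 8 3 potential (8 * q + a) 0 (2 ^ a) L := by
    refine ⟨h.completes (two_pow_add_two_pow_mul a q), ?_⟩
    rw [potential_two_pow, show potential 1 = 0 by decide, hlen]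
    ring
  obtain ⟨q', rfl⟩ := exists_eq_periodicTiling_of_isTight htight
  rw [length_periodicTiling] at hlen
  obtain rfl : q' = q := by omega
  rw [zero_add]

theorem stmt10_general (a q : ℕ) :
    stilde {3, 5, 9, 13, 17} (2 ^ a * (2 ^ (8 * q) - 1)) = (3 * q : ℕ) ∧
    Ktilde {3, 5, 9, 13, 17} (2 ^ a * (2 ^ (8 * q) - 1)) = {periodicTiling a q} := by
  have htiling := isTiling_periodicTiling a q
  have hlen := length_periodicTiling a q
  have hmin : ∀ L, IsTiling tiles (2 ^ a * (2 ^ (8 * q) - 1)) L →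
      (periodicTiling a q).length ≤ L.length :=
    fun L hL => hlen ▸ three_mul_le_length hL
  exact ⟨hlen ▸ htiling.stilde_eq_length hmin, htiling.Ktilde_eq_singleton hmin
    fun L hL hLlen => eq_periodicTiling_of_length_eq hL (hLlen.trans hlen)⟩

end Tiles

theorem stmt10 :
    (2 ^ 26 - 4 : ℕ) = 13 * 2 ^ 22 + 17 * 2 ^ 19 + 13 * 2 ^ 18 + 13 * 2 ^ 14 +
      17 * 2 ^ 11 + 13 * 2 ^ 10 + 13 * 2 ^ 6 + 17 * 2 ^ 3 + 13 * 2 ^ 2 ∧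
    stilde {3, 5, 9, 13, 17} (2 ^ 26 - 4) = 9 ∧
    Ktilde {3, 5, 9, 13, 17} (2 ^ 26 - 4) =
      {[(2, 13), (3, 17), (6, 13), (10, 13), (11, 17), (14, 13), (18, 13), (19, 17),
        (22, 13)]} := by
  exact ⟨by norm_num, stmt10_general 2 3⟩
end
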